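/- Let R be a commutative noetherian ring with identity, a an ideal of R, and M a weakly Laskerian R-module (the set Ass_R(M/N) of associated primes is finite for every submodule N of M) with Supp_R M ⊆ V(a). Then M is a-cofinite if and only if Hom_R(R/a, M) and Ext^1_R(R/a, M) are finitely generated R-modules. -/

import Mathlib

universe u

open CategoryTheory

/-- `Ext^i_R(R/a, M)` as an `R`-module, for `M : ModuleCat R`. -/
noncomputable def extQuot {R : Type u} [CommRing R] (a : Ideal R) (i : ℕ)
    (M : ModuleCat.{u} R) : ModuleCat.{u} R :=
  ((Ext R (ModuleCat.{u} R) i).obj (Opposite.op (ModuleCat.of R (R ⧸ a)))).obj M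

/-- An `R`-module `M` is `a`-cofinite if `Supp M ⊆ V(a)` and `Ext^i_R(R/a, M)` is a
finitely generated `R`-module for every `i ≥ 0`. -/
def IsCofinite {R : Type u} [CommRing R] (a : Ideal R) (M : ModuleCat.{u} R) : Prop :=
  Module.support R M ⊆ PrimeSpectrum.zeroLocus (a : Set R) ∧
    ∀ i : ℕ, Module.Finite R (extQuot a i M)

/-!
A weakly Laskerian module `M` has a finitely generated submodule `N` with `dim Supp (M ⧸ N) ≤ 1`:
if infinitely many primes that are maximal among the non-maximal ones stayed in the support of
every `M ⧸ N`, the Artin-Rees lemma would build a quotient of `M` with infinitely many associated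
primes. Finitely generated modules have finitely generated `Ext`, so `M` may be replaced by
`M ⧸ N`.

In dimension at most one, finiteness of the `a`-torsion makes the localizations of the module at
its minimal support primes Artinian. Induct along these: for `x ∈ a` the kernel and the image of
multiplication by `x` either are smaller at one of these primes, or have a quotient whose support
contains none of them and hence has smaller dimension. Multiplication by `x` factors through its
image but kills `Ext(R/a, -)`, which controls the image by the kernel and the quotient.
-/

namespace Cofiniteness

section ExtComparison

open Limits CochainComplex.HomComplex

variable {R : Type*} [CommRing R] {C : Type*} [Category* C] [Abelian C] [Linear R C] [HasExt C]
  {X : C} (P : ProjectiveResolution X) (Y : C)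

variable {Y} in
lemma eq_zero_of_extMk_eq_zero (f : P.complex.X 0 ⟶ Y) (hf : P.complex.d 1 0 ≫ f = 0)
    (h : P.extMk f 1 rfl hf = 0) : f = 0 := by
  rw [← P.extEquivCohomologyClass.apply_eq_iff_eq, P.extEquivCohomologyClass_extMk,
    P.extEquivCohomologyClass_zero, CohomologyClass.mk_eq_zero_iff,
    Cocycle.toSingleMk_mem_coboundaries_iff _ _ _ _ _ 1 (by simp)] at h
  obtain ⟨g, hg⟩ := h
  have hd : P.cochainComplex.d (-((0 : ℕ) : ℤ)) 1 = 0 :=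
    (CochainComplex.isZero_of_isStrictlyLE _ 0 1).eq_of_tgt _ _
  rw [← cancel_epi (P.cochainComplexXIso (-((0 : ℕ) : ℤ)) 0 rfl).hom, ← hg, hd, zero_comp,
    comp_zero]

variable {Y} in
lemma extMk_eq_zero_iff_exists_prev {n : ℕ} (f : P.complex.X n ⟶ Y)
    (hf : P.complex.d (n + 1) n ≫ f = 0) :
    P.extMk f (n + 1) rfl hf = 0 ↔
      ∃ g : P.complex.X ((ComplexShape.up ℕ).prev n) ⟶ Y, P.complex.d n _ ≫ g = f := by
  cases n with
  | zero =>
    constructor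
    · intro h
      exact ⟨0, by rw [comp_zero, eq_zero_of_extMk_eq_zero P f hf h]⟩
    · rintro ⟨g, rfl⟩
      simp only [P.complex.shape 0 ((ComplexShape.up ℕ).prev 0) (by simp), zero_comp,
        P.extMk_zero]
  | succ n =>
    rw [CochainComplex.prev_nat_succ]
    exact P.extMk_eq_zero_iff f _ rfl hf n rfl

variable {Y} in
lemma smul_extMk {n : ℕ} (r : R) (f : P.complex.X n ⟶ Y) (hf : P.complex.d (n + 1) n ≫ f = 0) :
    r • P.extMk f (n + 1) rfl hf =
      P.extMk (r • f) (n + 1) rfl (by rw [Linear.comp_smul, hf, smul_zero]) := by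
  simp only [Abelian.Ext.smul_eq_comp_mk₀, P.extMk_comp_mk₀, Linear.comp_smul, Category.comp_id]

variable (R) in
/-- The complex of `R`-modules whose homology is the `n`-th cohomology of `Hom(P, Y)`. -/
noncomputable abbrev homShortComplex (n : ℕ) : ShortComplex (ModuleCat R) :=
  (P.complex.linearYonedaObj R Y).sc' ((ComplexShape.up ℕ).prev n) n (n + 1)

variable (R) in
/-- The map sending an `n`-cocycle of `Hom(P, Y)`, for `P` a projective resolution of `X`, to its
class in the derived-category group `Ext X Y n`. -/
noncomputable def cocyclesToExt (n : ℕ) :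
    (homShortComplex R P Y n).g.hom.ker →ₗ[R] Abelian.Ext X Y n where
  toFun f := P.extMk f.1 (n + 1) rfl f.2
  map_add' f g := (P.add_extMk f.1 g.1 (n + 1) rfl f.2 g.2).symm
  map_smul' r f := (smul_extMk P r f.1 f.2).symm

lemma cocyclesToExt_surjective (n : ℕ) : Function.Surjective (cocyclesToExt R P Y n) := by
  intro x
  obtain ⟨f, hf, rfl⟩ := P.extMk_surjective x (n + 1) rfl
  exact ⟨⟨f, hf⟩, rfl⟩

lemma ker_cocyclesToExt (n : ℕ) :
    (cocyclesToExt R P Y n).ker = (homShortComplex R P Y n).moduleCatToCycles.range := by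
  ext f
  refine (extMk_eq_zero_iff_exists_prev P f.1 f.2).trans ⟨?_, ?_⟩
  · rintro ⟨g, hg⟩
    exact ⟨g, Subtype.ext hg⟩
  · rintro ⟨g, hg⟩
    exact ⟨g, congrArg Subtype.val hg⟩

variable (R X) in
/-- The identification of the two constructions of `Ext`: the derived functor `Ext R C n` and the
group `Abelian.Ext X Y n` of morphisms in the derived category. -/
noncomputable def extObjLinearEquiv [EnoughProjectives C] (n : ℕ) :
    ((Ext R C n).obj (Opposite.op X)).obj Y ≃ₗ[R] Abelian.Ext X Y n :=
  let P := ProjectiveResolution.of X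
  (P.isoExt n Y ≪≫ ShortComplex.homologyMapIso
      ((P.complex.linearYonedaObj R Y).isoSc' _ n (n + 1) rfl (by simp)) ≪≫
    (homShortComplex R P Y n).moduleCatHomologyIso).toLinearEquiv ≪≫ₗ
  Submodule.quotEquivOfEq _ _ (ker_cocyclesToExt P Y n).symm ≪≫ₗ
  (cocyclesToExt R P Y n).quotKerEquivOfSurjective (cocyclesToExt_surjective P Y n)

end ExtComparison

section ExtFinite

section

variable {R : Type*} [CommRing R]

lemma finite_of_ker_le_range [IsNoetherianRing R] {A B C : Type*} [AddCommGroup A] [Module R A]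
    [AddCommGroup B] [Module R B] [AddCommGroup C] [Module R C] [Module.Finite R A]
    [Module.Finite R C] (f : A →ₗ[R] B) (g : B →ₗ[R] C) (h : g.ker ≤ f.range) :
    Module.Finite R B := by
  have : IsNoetherian R g.ker := isNoetherian_of_le h
  have : IsNoetherian R B := isNoetherian_of_range_eq_ker g.ker.subtype g (by simp)
  infer_instance

section Linear

open Abelian

variable {C : Type*} [Category* C] [Abelian C] [Linear R C] [HasExt C] {X : C}

lemma ext_smul_eq_zero {x : R} (hx : x • 𝟙 X = 0) {M : C} {i : ℕ} (y : Ext X M i) :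
    x • y = 0 := by
  rw [← Ext.mk₀_id_comp y, ← Ext.smul_comp, ← Ext.mk₀_smul, hx, Ext.mk₀_zero, Ext.zero_comp]

variable [IsNoetherianRing R]

section ShortExact

variable {S : ShortComplex C} {i : ℕ}

lemma finite_ext_middle (hS : S.ShortExact) [Module.Finite R (Ext X S.X₁ i)]
    [Module.Finite R (Ext X S.X₃ i)] : Module.Finite R (Ext X S.X₂ i) :=
  finite_of_ker_le_range ((Ext.mk₀ S.f).postcompOfLinear R X (add_zero i))
    ((Ext.mk₀ S.g).postcompOfLinear R X (add_zero i)) (Ext.covariant_sequence_exact₂ X hS)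

lemma finite_ext_right (hS : S.ShortExact) [Module.Finite R (Ext X S.X₂ i)]
    [Module.Finite R (Ext X S.X₁ (i + 1))] : Module.Finite R (Ext X S.X₃ i) :=
  finite_of_ker_le_range ((Ext.mk₀ S.g).postcompOfLinear R X (add_zero i))
    (hS.extClass.postcompOfLinear R X rfl) fun x hx ↦ Ext.covariant_sequence_exact₃ X hS x rfl hx

lemma finite_ext_left (hS : S.ShortExact) [Module.Finite R (Ext X S.X₃ i)]
    [Module.Finite R (Ext X S.X₂ (i + 1))] : Module.Finite R (Ext X S.X₁ (i + 1)) :=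
  finite_of_ker_le_range (hS.extClass.postcompOfLinear R X rfl)
    ((Ext.mk₀ S.f).postcompOfLinear R X (add_zero (i + 1)))
    fun x hx ↦ Ext.covariant_sequence_exact₁ X hS x hx rfl

lemma finite_ext_zero_of_mono {A B : C} (f : A ⟶ B) [Mono f] [Module.Finite R (Ext X B 0)] :
    Module.Finite R (Ext X A 0) :=
  Module.Finite.of_injective ((Ext.mk₀ f).postcompOfLinear R X (add_zero 0))
    (Ext.postcomp_mk₀_injective_of_mono X f)

lemma finite_ker_postcomp_mk₀_f (hS : S.ShortExact) (h : ∀ i, Module.Finite R (Ext X S.X₃ i)) :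
    Module.Finite R ((Ext.mk₀ S.f).postcompOfLinear R X (add_zero i)).ker := by
  cases i with
  | zero =>
    have := hS.mono_f
    rw [LinearMap.ker_eq_bot.2 (Ext.postcomp_mk₀_injective_of_mono X S.f)]
    infer_instance
  | succ i =>
    have hδ : ((Ext.mk₀ S.f).postcompOfLinear R X (add_zero (i + 1))).ker ≤
        (hS.extClass.postcompOfLinear R X rfl).range :=
      fun x hx ↦ Ext.covariant_sequence_exact₁ X hS x hx rfl
    have := isNoetherian_of_le hδ
    infer_instance

end ShortExact

/-- The composite `Ext(M) ⟶ Ext(I) ⟶ Ext(M)` is zero, so the image of `Ext(M)` in `Ext(I)` comes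
from `Ext(Q)`. -/
lemma finite_ext_of_smul_id_eq_zero {K M I Q : C} {x : R} (hx : x • 𝟙 X = 0) {j : K ⟶ M}
    {p : M ⟶ I} {ι : I ⟶ M} {q : M ⟶ Q} {hjp : j ≫ p = 0} {hιq : ι ≫ q = 0}
    (hp : (ShortComplex.mk j p hjp).ShortExact) (hι : (ShortComplex.mk ι q hιq).ShortExact)
    (hpι : p ≫ ι = x • 𝟙 M) (hK : ∀ i, Module.Finite R (Ext X K i))
    (hQ : ∀ i, Module.Finite R (Ext X Q i)) (i : ℕ) : Module.Finite R (Ext X M i) := by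
  let φ := (Ext.mk₀ p).postcompOfLinear R X (add_zero i)
  let ψ := (Ext.mk₀ ι).postcompOfLinear R X (add_zero i)
  have hψφ (y : Ext X M i) : φ y ∈ ψ.ker := by
    change (y.comp (Ext.mk₀ p) (add_zero i)).comp (Ext.mk₀ ι) (add_zero i) = 0
    rw [Ext.comp_assoc_of_third_deg_zero, Ext.mk₀_comp_mk₀, hpι, ← Ext.smul_eq_comp_mk₀,
      ext_smul_eq_zero hx]
  have : Module.Finite R ψ.ker := finite_ker_postcomp_mk₀_f hι hQ
  refine finite_of_ker_le_range ((Ext.mk₀ j).postcompOfLinear R X (add_zero i))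
    (φ.codRestrict ψ.ker hψφ) ?_
  rw [LinearMap.ker_codRestrict]
  exact Ext.covariant_sequence_exact₂ X hp

end Linear

end

variable {R : Type u} [CommRing R] {M : Type u} [AddCommGroup M] [Module R M]

lemma shortExact_ofHom {A B C : Type u} [AddCommGroup A] [Module R A] [AddCommGroup B] [Module R B]
    [AddCommGroup C] [Module R C] {f : A →ₗ[R] B} {g : B →ₗ[R] C} (hf : Function.Injective f)
    (hg : Function.Surjective g) (h : Function.Exact f g) :
    (ShortComplex.mk (ModuleCat.ofHom f) (ModuleCat.ofHom g)
      (ModuleCat.hom_ext h.linearMap_comp_eq_zero)).ShortExact where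
  exact := (ShortComplex.ShortExact.moduleCat_exact_iff_function_exact _).2 h
  mono_f := (ModuleCat.mono_iff_injective _).2 hf
  epi_g := (ModuleCat.epi_iff_surjective _).2 hg

lemma shortExact_subtype_mkQ (N : Submodule R M) :
    (ShortComplex.mk (ModuleCat.ofHom N.subtype) (ModuleCat.ofHom N.mkQ)
      (ModuleCat.hom_ext (LinearMap.exact_subtype_mkQ N).linearMap_comp_eq_zero)).ShortExact :=
  shortExact_ofHom N.subtype_injective N.mkQ_surjective (LinearMap.exact_subtype_mkQ N)

lemma exact_subtype_ker_rangeRestrict {M' : Type*} [AddCommGroup M'] [Module R M']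
    (f : M →ₗ[R] M') : Function.Exact f.ker.subtype f.rangeRestrict :=
  LinearMap.exact_iff.2 <| by rw [LinearMap.ker_rangeRestrict, Submodule.range_subtype]

lemma shortExact_subtype_ker_rangeRestrict {M' : Type u} [AddCommGroup M'] [Module R M']
    (f : M →ₗ[R] M') :
    (ShortComplex.mk (ModuleCat.ofHom f.ker.subtype) (ModuleCat.ofHom f.rangeRestrict)
      (ModuleCat.hom_ext (exact_subtype_ker_rangeRestrict f).linearMap_comp_eq_zero)).ShortExact :=
  shortExact_ofHom f.ker.subtype_injective f.surjective_rangeRestrict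
    (exact_subtype_ker_rangeRestrict f)

/-- The finiteness condition `Ext^i_R(R/a, M)` finitely generated, for the derived-category
construction of `Ext`, whose long exact sequences are available. -/
abbrev ExtFinite (a : Ideal R) (M : Type u) [AddCommGroup M] [Module R M] (i : ℕ) : Prop :=
  Module.Finite R (Abelian.Ext (ModuleCat.of R (R ⧸ a)) (ModuleCat.of R M) i)

lemma finite_extQuot_iff (a : Ideal R) (i : ℕ) (M : ModuleCat.{u} R) :
    Module.Finite R (extQuot a i M) ↔ ExtFinite a M i :=
  Module.Finite.equiv_iff (extObjLinearEquiv R (ModuleCat.of R (R ⧸ a)) M i)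

variable {a : Ideal R}

lemma smul_id_quotient_eq_zero {x : R} (hx : x ∈ a) : x • 𝟙 (ModuleCat.of R (R ⧸ a)) = 0 := by
  ext
  change x • (1 : R ⧸ a) = 0
  rw [Algebra.smul_def, mul_one]
  exact Ideal.Quotient.eq_zero_iff_mem.2 hx

lemma extFinite_of_ker_of_quotient_range [IsNoetherianRing R] {x : R} (hx : x ∈ a)
    (hK : ∀ i, ExtFinite a (LinearMap.lsmul R M x).ker i)
    (hQ : ∀ i, ExtFinite a (M ⧸ (LinearMap.lsmul R M x).range) i) (i : ℕ) : ExtFinite a M i :=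
  finite_ext_of_smul_id_eq_zero (smul_id_quotient_eq_zero hx)
    (shortExact_subtype_ker_rangeRestrict (LinearMap.lsmul R M x))
    (shortExact_subtype_mkQ (LinearMap.lsmul R M x).range) rfl hK hQ i

variable (R M a) in
/-- `Hom(R/a, M)` is the `a`-torsion of `M`, through evaluation at `1`. -/
noncomputable def quotientHomEquivTorsionBySet :
    ((R ⧸ a) →ₗ[R] M) ≃ₗ[R] Submodule.torsionBySet R M (a : Set R) where
  toFun f := ⟨f 1, by
    rw [Submodule.mem_torsionBySet_iff]
    intro r
    rw [← map_smul, Algebra.smul_def, mul_one, Ideal.Quotient.algebraMap_eq,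
      Ideal.Quotient.eq_zero_iff_mem.2 r.2, map_zero]⟩
  map_add' _ _ := rfl
  map_smul' _ _ := rfl
  invFun m := Submodule.liftQ a (LinearMap.toSpanSingleton R M m) fun r hr ↦
    (Submodule.mem_torsionBySet_iff _ _).1 m.2 ⟨r, hr⟩
  left_inv f := by
    refine Submodule.linearMap_qext _ (LinearMap.ext_ring ?_)
    exact one_smul R (f 1)
  right_inv m := Subtype.ext (one_smul R (m : M))

lemma extFinite_zero_iff :
    ExtFinite a M 0 ↔ Module.Finite R (Submodule.torsionBySet R M (a : Set R)) :=
  Module.Finite.equiv_iff <| Abelian.Ext.linearEquiv₀ ≪≫ₗ ModuleCat.homLinearEquiv ≪≫ₗ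
    quotientHomEquivTorsionBySet R M a

end ExtFinite

section Artinian

/-- A sequence of monotone functions stabilizes: the diagonal controls all but finitely many of the
arguments, and the remaining ones are handled one at a time. -/
lemma wellFoundedGT_orderHom_nat (β : Type*) [PartialOrder β] [WellFoundedGT β] :
    WellFoundedGT (ℕ →o β) := by
  rw [wellFoundedGT_iff_monotone_chain_condition]
  intro F
  have hstab (G : ℕ →o β) : ∃ n, ∀ m, n ≤ m → G n = G m :=
    wellFoundedGT_iff_monotone_chain_condition.1 ‹_› G
  obtain ⟨d, hd⟩ := hstab ⟨fun j ↦ F j j, fun i j h ↦ (F.monotone h i).trans ((F j).monotone h)⟩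
  choose ν hν using fun k ↦ hstab ⟨fun j ↦ F j k, fun i j h ↦ F.monotone h k⟩
  refine ⟨max d ((Finset.range d).sup ν), fun m hm ↦ le_antisymm (F.monotone hm) fun k ↦ ?_⟩
  have hνm := (le_max_right _ _).trans hm
  rcases lt_or_ge k d with hk | hk
  · have hνk : ν k ≤ (Finset.range d).sup ν := Finset.le_sup (f := ν) (Finset.mem_range.2 hk)
    exact (((hν k _ (hνk.trans (le_max_right _ _))).symm.trans
      (hν k m (hνk.trans hνm))).symm).le
  · calc F m k ≤ F (max m k) (max m k) :=
        (F.monotone (le_max_left m k) k).trans ((F _).monotone (le_max_right m k))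
      _ = F d d := (hd _ (hk.trans (le_max_right m k))).symm
      _ ≤ F _ k := (F.monotone (le_max_left _ _) d).trans ((F _).monotone hk)

variable {R N : Type*} [CommRing R] [AddCommGroup N] [Module R N]

/-- The decreasing sequence of submodules `x ^ k • L ∩ ker x`, which determines `L` among its
submodules when `N` is `x`-torsion. -/
def powSMulInfKer (x : R) (L : Submodule R N) :
    ℕ →o (Submodule R (LinearMap.lsmul R N x).ker)ᵒᵈ where
  toFun k := OrderDual.toDual
    ((L.map (LinearMap.lsmul R N (x ^ k))).comap (LinearMap.lsmul R N x).ker.subtype)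
  monotone' i j hij := by
    rintro z ⟨l, hl, hlz⟩
    refine ⟨x ^ (j - i) • l, L.smul_mem _ hl, ?_⟩
    rw [← hlz, LinearMap.lsmul_apply, LinearMap.lsmul_apply, smul_smul, ← pow_add,
      Nat.add_sub_cancel' hij]

lemma le_of_powSMulInfKer_le {x : R} (hx : ∀ n : N, ∃ k : ℕ, x ^ k • n = 0)
    {L L' : Submodule R N} (hL : L' ≤ L) (h : powSMulInfKer x L' ≤ powSMulInfKer x L) :
    L ≤ L' := by
  suffices ∀ k, ∀ l ∈ L, x ^ k • l = 0 → l ∈ L' from fun l hl ↦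
    let ⟨k, hk⟩ := hx l
    this k l hl hk
  intro k
  induction k with
  | zero =>
    intro l _ h0
    rw [pow_zero, one_smul] at h0
    exact h0 ▸ zero_mem L'
  | succ k ih =>
    intro l hl hlk
    have hker : x ^ k • l ∈ (LinearMap.lsmul R N x).ker := by
      rwa [LinearMap.mem_ker, LinearMap.lsmul_apply, smul_smul, ← pow_succ']
    obtain ⟨l', hl', hkl⟩ := h k (show ⟨x ^ k • l, hker⟩ ∈ _ from ⟨l, hl, rfl⟩)
    have hsub : l - l' ∈ L' := ih _ (sub_mem hl (hL hl')) (by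
      rw [smul_sub, sub_eq_zero]
      exact hkl.symm)
    exact (sub_add_cancel l l') ▸ add_mem hsub hl'

lemma isArtinian_of_ker {x : R} (hx : ∀ n : N, ∃ k : ℕ, x ^ k • n = 0)
    [IsArtinian R (LinearMap.lsmul R N x).ker] : IsArtinian R N := by
  have := wellFoundedGT_orderHom_nat (Submodule R (LinearMap.lsmul R N x).ker)ᵒᵈ
  have hmono : StrictMono fun L : (Submodule R N)ᵒᵈ ↦ powSMulInfKer x (OrderDual.ofDual L) := by
    refine fun L L' hL ↦ lt_of_le_not_ge (fun k ↦ ?_) fun h ↦ ?_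
    · exact Submodule.comap_mono (Submodule.map_mono hL.le)
    · exact hL.not_ge (le_of_powSMulInfKer_le hx hL.le h)
  have := hmono.wellFoundedGT
  exact ⟨(wellFounded_gt : WellFounded ((· > ·) : (Submodule R N)ᵒᵈ → _ → Prop))⟩

lemma isArtinian_of_torsionBySet (s : Finset R) (N : Type*) [AddCommGroup N] [Module R N]
    (hs : ∀ x ∈ s, ∀ n : N, ∃ k : ℕ, x ^ k • n = 0)
    [IsArtinian R (Submodule.torsionBySet R N (s : Set R))] : IsArtinian R N := by
  classical
  induction s using Finset.induction_on generalizing N with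
  | empty =>
    exact isArtinian_of_injective
      (LinearMap.id.codRestrict (Submodule.torsionBySet R N ((∅ : Finset R) : Set R))
        (by simp [Submodule.mem_torsionBySet_iff])) fun x y h ↦ congrArg Subtype.val h
  | insert x s _ ih =>
    let K := (LinearMap.lsmul R N x).ker
    have hmem (z : Submodule.torsionBySet R K (s : Set R)) :
        (z : N) ∈ Submodule.torsionBySet R N ((insert x s : Finset R) : Set R) := by
      rw [Submodule.mem_torsionBySet_iff]
      rintro ⟨y, hy⟩
      rcases Finset.mem_insert.1 hy with rfl | hy
      · exact z.1.2
      · exact congrArg Subtype.val ((Submodule.mem_torsionBySet_iff _ _).1 z.2 ⟨y, hy⟩)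
    have : IsArtinian R (Submodule.torsionBySet R K (s : Set R)) :=
      isArtinian_of_injective ((K.subtype ∘ₗ Submodule.subtype _).codRestrict _ hmem)
        fun z w h ↦ by
          have hzw := congrArg Subtype.val h
          exact Subtype.ext (Subtype.ext hzw)
    have : IsArtinian R K := ih K fun y hy n ↦
      let ⟨k, hk⟩ := hs y (Finset.mem_insert_of_mem hy) n
      ⟨k, Subtype.ext hk⟩
    exact isArtinian_of_ker (hs x (Finset.mem_insert_self x s))

lemma isArtinian_of_isTorsionBySet (m : Ideal R) [m.IsMaximal] [Module.Finite R N]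
    (hm : Module.IsTorsionBySet R N (m : Set R)) : IsArtinian R N := by
  let := hm.module
  have := hm.isScalarTower (S := R)
  have := Module.Finite.of_restrictScalars_finite R (R ⧸ m) N
  let := Ideal.Quotient.field m
  have : IsArtinian (R ⧸ m) N := inferInstance
  exact isArtinian_of_surjective_algebraMap (R := R ⧸ m) (S := R) Ideal.Quotient.mk_surjective

lemma isArtinian_of_finite_torsionBySet {m : Ideal R} [m.IsMaximal] (hfg : m.FG)
    (hm : ∀ x ∈ m, ∀ n : N, ∃ k : ℕ, x ^ k • n = 0)
    [Module.Finite R (Submodule.torsionBySet R N (m : Set R))] : IsArtinian R N := by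
  have := isArtinian_of_isTorsionBySet m
    (Submodule.torsionBySet_isTorsionBySet (M := N) (m : Set R))
  obtain ⟨s, rfl⟩ := hfg
  rw [← Submodule.torsionBySet_eq_torsionBySet_span] at this
  exact isArtinian_of_torsionBySet s N fun x hx ↦ hm x (Ideal.subset_span hx)

end Artinian

section Support

variable {R M : Type*} [CommRing R] [AddCommGroup M] [Module R M] {a : Ideal R}

lemma exists_smul_mem_torsionBySet (ha : a.FG) (S : Submonoid R) {m : M}
    (h : ∀ x ∈ a, ∃ u ∈ S, u • x • m = 0) :
    ∃ u ∈ S, u • m ∈ Submodule.torsionBySet R M (a : Set R) := by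
  obtain ⟨s, rfl⟩ := ha
  choose! u huS hu using fun x hx ↦ h x (Ideal.subset_span hx)
  refine ⟨∏ x ∈ s, u x, S.prod_mem huS, ?_⟩
  rw [← Submodule.torsionBySet_eq_torsionBySet_span, Submodule.mem_torsionBySet_iff]
  rintro ⟨x, hx⟩
  obtain ⟨c, hc⟩ := Finset.dvd_prod_of_mem u hx
  rw [hc, mul_comm, mul_smul, smul_comm, smul_comm _ (u x), hu x hx, smul_zero]

/-- Every prime in the support of `M` contains an associated prime of `M`, and the elements
witnessing associated primes are killed by `a`. -/
lemma support_torsionBySet_eq [IsNoetherianRing R]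
    (hM : Module.support R M ⊆ PrimeSpectrum.zeroLocus (a : Set R)) :
    Module.support R (Submodule.torsionBySet R M (a : Set R)) = Module.support R M := by
  refine (Module.support_subset_of_injective _ (Submodule.subtype_injective _)).antisymm ?_
  intro p hp
  obtain ⟨m, hm⟩ := Module.mem_support_iff_exists_annihilator.1 hp
  obtain ⟨q, hq, hqp⟩ := Ideal.exists_minimalPrimes_le hm
  have hqass := (Module.associatedPrimes.minimalPrimes_annihilator_subset_associatedPrimes R
    (R ∙ m) hq).map_of_injective _ (Submodule.subtype_injective _)
  obtain ⟨hqprime, z, rfl⟩ := isAssociatedPrime_iff.1 hqass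
  have hzq : ⟨_, hqprime⟩ ∈ Module.support R M := Module.mem_support_iff'.2
    ⟨z, fun r hr hrz ↦ hr (Submodule.mem_colon_singleton.2 hrz)⟩
  have hz : z ∈ Submodule.torsionBySet R M (a : Set R) :=
    (Submodule.mem_torsionBySet_iff _ _).2 fun x ↦
      Submodule.mem_colon_singleton.1 (hM hzq x.2)
  refine Module.mem_support_iff'.2 ⟨⟨z, hz⟩, fun r hr hrz ↦ hr (hqp ?_)⟩
  exact Submodule.mem_colon_singleton.2 (congrArg Subtype.val hrz)

lemma finite_setOf_minimal_support [IsNoetherianRing R]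
    (hM : Module.support R M ⊆ PrimeSpectrum.zeroLocus (a : Set R))
    [Module.Finite R (Submodule.torsionBySet R M (a : Set R))] :
    {p | Minimal (· ∈ Module.support R M) p}.Finite := by
  rw [← support_torsionBySet_eq hM, Module.support_eq_zeroLocus]
  have hfin := Ideal.finite_minimalPrimes_of_isNoetherianRing R
    (Module.annihilator R (Submodule.torsionBySet R M (a : Set R)))
  refine Set.Finite.of_finite_image (f := PrimeSpectrum.asIdeal) (hfin.subset ?_)
    (fun p _ q _ h ↦ PrimeSpectrum.ext h)
  rintro _ ⟨p, hp, rfl⟩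
  exact ⟨⟨p.2, hp.1⟩, fun q hq hqp ↦ hp.2 (y := ⟨q, hq.1⟩) hq.2 hqp⟩

lemma notMem_support_quotient_iff {N : Submodule R M} {p : PrimeSpectrum R} :
    p ∉ Module.support R (M ⧸ N) ↔ ∀ m : M, ∃ u ∈ p.asIdeal.primeCompl, u • m ∈ N := by
  simp only [Module.notMem_support_iff', N.mkQ_surjective.forall, Submodule.mkQ_apply,
    ← Submodule.Quotient.mk_smul, Submodule.Quotient.mk_eq_zero]
  rfl

lemma notMem_support_quotient_torsionBySet (ha : a.FG) {p : PrimeSpectrum R}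
    (h : ∀ x ∈ a, p ∉ Module.support R (M ⧸ (LinearMap.lsmul R M x).ker)) :
    p ∉ Module.support R (M ⧸ Submodule.torsionBySet R M (a : Set R)) := by
  refine notMem_support_quotient_iff.2 fun m ↦ exists_smul_mem_torsionBySet ha _ fun x hx ↦ ?_
  obtain ⟨u, hu, hum⟩ := notMem_support_quotient_iff.1 (h x hx) m
  exact ⟨u, hu, (smul_comm u x m).trans hum⟩

/-- If `u • x ^ k • m` never vanished, some prime `q ⊇ Ann m` would avoid `x` and the complement
of `p`, contradicting minimality of `p`. -/
lemma exists_smul_pow_smul_eq_zero {p : PrimeSpectrum R}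
    (hp : Minimal (· ∈ Module.support R M) p) {x : R} (hx : x ∈ p.asIdeal) (m : M) :
    ∃ k : ℕ, ∃ u ∈ p.asIdeal.primeCompl, u • x ^ k • m = 0 := by
  by_contra! hc
  obtain ⟨q, hq, hmq, hdisj⟩ := Ideal.exists_le_prime_disjoint
    (LinearMap.toSpanSingleton R M m).ker (Submonoid.powers x ⊔ p.asIdeal.primeCompl) (by
      rw [Set.disjoint_left]
      intro r hr hr'
      obtain ⟨_, ⟨k, rfl⟩, u, hu, rfl⟩ := Submonoid.mem_sup.1 hr'
      refine hc k u hu ?_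
      rw [smul_smul, mul_comm]
      exact hr)
  have hqM : (⟨q, hq⟩ : PrimeSpectrum R) ∈ Module.support R M :=
    Module.mem_support_iff'.2 ⟨m, fun r hr h ↦ hr (hmq h)⟩
  have hqp : q ≤ p.asIdeal := fun r hr ↦ by
    by_contra hrp
    exact Set.disjoint_left.1 hdisj hr (Submonoid.mem_sup_right hrp)
  exact Set.disjoint_left.1 hdisj (hp.2 hqM hqp hx)
    (Submonoid.mem_sup_left (Submonoid.mem_powers x))

lemma torsionBySet_map_le_localized (ha : a.FG) (S : Submonoid R) :
    Submodule.torsionBySet (Localization S) (LocalizedModule S M)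
        (a.map (algebraMap R (Localization S)) : Set (Localization S)) ≤
      (Submodule.torsionBySet R M (a : Set R)).localized S := by
  intro n hn
  rw [Submodule.mem_torsionBySet_iff] at hn
  induction n using LocalizedModule.induction_on with
  | _ m t =>
    obtain ⟨u, huS, hu⟩ := exists_smul_mem_torsionBySet ha S (m := m) fun x hx ↦ by
      have hxm := hn ⟨_, Ideal.mem_map_of_mem _ hx⟩
      rw [algebraMap_smul, LocalizedModule.smul'_mk, IsLocalizedModule.mk_eq_mk',
        IsLocalizedModule.mk'_eq_zero'] at hxm
      obtain ⟨⟨v, hv⟩, hvm⟩ := hxm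
      exact ⟨v, hv, hvm⟩
    rw [Submodule.mem_localized']
    refine ⟨u • m, hu, ⟨u, huS⟩ * t, ?_⟩
    rw [IsLocalizedModule.mk_eq_mk']
    exact IsLocalizedModule.mk'_cancel_left _ m ⟨u, huS⟩ t

lemma exists_pow_smul_eq_zero_of_mem_maximalIdeal {p : PrimeSpectrum R}
    (hp : Minimal (· ∈ Module.support R M) p) {y : Localization.AtPrime p.asIdeal}
    (hy : y ∈ IsLocalRing.maximalIdeal (Localization.AtPrime p.asIdeal))
    (n : LocalizedModule p.asIdeal.primeCompl M) : ∃ k : ℕ, y ^ k • n = 0 := by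
  induction y using Localization.induction_on with
  | H y =>
    obtain ⟨x, s⟩ := y
    induction n using LocalizedModule.induction_on with
    | _ m t =>
      rw [Localization.mk_eq_mk', IsLocalization.AtPrime.mk'_mem_maximal_iff _ p.asIdeal] at hy
      obtain ⟨k, u, hu, hum⟩ := exists_smul_pow_smul_eq_zero hp hy m
      refine ⟨k, ?_⟩
      rw [Localization.mk_pow, LocalizedModule.mk_smul_mk, IsLocalizedModule.mk_eq_mk',
        IsLocalizedModule.mk'_eq_zero']
      exact ⟨⟨u, hu⟩, hum⟩

lemma isArtinian_localizedModule [IsNoetherianRing R]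
    (hM : Module.support R M ⊆ PrimeSpectrum.zeroLocus (a : Set R))
    [Module.Finite R (Submodule.torsionBySet R M (a : Set R))] {p : PrimeSpectrum R}
    (hp : Minimal (· ∈ Module.support R M) p) :
    IsArtinian (Localization.AtPrime p.asIdeal) (LocalizedModule p.asIdeal.primeCompl M) := by
  let A := Localization.AtPrime p.asIdeal
  have : IsNoetherianRing A := IsLocalization.isNoetherianRing p.asIdeal.primeCompl A inferInstance
  have : Module.Finite A
      ((Submodule.torsionBySet R M (a : Set R)).localized p.asIdeal.primeCompl) :=
    Module.Finite.equiv (Submodule.localizedEquiv _ _).symm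
  have hle : a.map (algebraMap R A) ≤ IsLocalRing.maximalIdeal A := by
    rw [← Localization.AtPrime.map_eq_maximalIdeal]
    exact Ideal.map_mono (hM hp.1)
  have : IsNoetherian A (Submodule.torsionBySet A (LocalizedModule p.asIdeal.primeCompl M)
      (IsLocalRing.maximalIdeal A : Set A)) :=
    isNoetherian_of_le ((Submodule.torsionBySet_le_torsionBySet_of_subset hle).trans
      (torsionBySet_map_le_localized (IsNoetherian.noetherian a) p.asIdeal.primeCompl))
  exact isArtinian_of_finite_torsionBySet (m := IsLocalRing.maximalIdeal A)
    (IsNoetherian.noetherian _) fun y hy ↦ exists_pow_smul_eq_zero_of_mem_maximalIdeal hp hy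

end Support

section LocalizedInduction

variable {R : Type*} [CommRing R]

lemma exists_smul_mem_of_localized_le {M : Type*} [AddCommGroup M] [Module R M]
    {p : PrimeSpectrum R} {N' N : Submodule R M}
    (h : N.localized p.asIdeal.primeCompl ≤ N'.localized p.asIdeal.primeCompl) {n : M}
    (hn : n ∈ N) : ∃ u ∈ p.asIdeal.primeCompl, u • n ∈ N' := by
  obtain ⟨m, hm, s, hms⟩ := (Submodule.mem_localized' ..).1
    (h ((Submodule.mem_localized' ..).2 ⟨n, hn, 1, rfl⟩))
  obtain ⟨u, hu⟩ := (IsLocalizedModule.mk'_eq_mk'_iff _ _ _ _ _).1 hms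
  refine ⟨(u * s : p.asIdeal.primeCompl), (u * s).2, ?_⟩
  have : (u * s : p.asIdeal.primeCompl) • n = u • m := by
    rw [mul_smul, ← one_smul p.asIdeal.primeCompl m]
    exact hu
  rw [← Submonoid.smul_def, this]
  exact N'.smul_mem _ hm

lemma induction_localizedModule_artinian {M : Type u} [AddCommGroup M] [Module R M]
    {W : Set (PrimeSpectrum R)} (hW : W.Finite)
    (hart : ∀ p ∈ W, IsArtinian (Localization.AtPrime p.asIdeal)
      (LocalizedModule p.asIdeal.primeCompl M))
    {P : ∀ (N : Type u) [AddCommGroup N] [Module R N], Prop}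
    (step : ∀ (N : Type u) [AddCommGroup N] [Module R N] (f : N →ₗ[R] M), Function.Injective f →
      (∀ J : Submodule R N, ¬ Disjoint W (Module.support R (N ⧸ J)) → P J) → P N) :
    P M := by
  let α := ∀ p : W, Submodule (Localization p.1.asIdeal.primeCompl)
    (LocalizedModule p.1.asIdeal.primeCompl M)
  have : Finite W := hW
  have (p : W) : WellFoundedLT (Submodule (Localization p.1.asIdeal.primeCompl)
    (LocalizedModule p.1.asIdeal.primeCompl M)) := hart p p.2
  let Φ (N : Submodule R M) : α := fun p ↦ N.localized p.1.asIdeal.primeCompl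
  have hΦ : Monotone Φ := fun N N' h p ↦ (Submodule.localized'gi _ _ _).gc.monotone_l h
  suffices ∀ (c : α) (N : Type u) [AddCommGroup N] [Module R N] (f : N →ₗ[R] M),
      Function.Injective f → Φ f.range = c → P N from
    this _ M LinearMap.id Function.injective_id rfl
  intro c
  induction c using WellFoundedLT.induction with
  | ind c ih =>
    rintro N _ _ f hf rfl
    refine step N f hf fun J hJ ↦ ih _ ?_ J (f ∘ₗ J.subtype) (hf.comp J.subtype_injective) rfl
    refine lt_of_le_not_ge (hΦ (LinearMap.range_comp_le_range _ _)) fun hle ↦ hJ ?_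
    rw [Set.disjoint_left]
    refine fun p hp ↦ notMem_support_quotient_iff.2 fun n ↦ ?_
    obtain ⟨u, hu, j, hj⟩ := exists_smul_mem_of_localized_le (hle ⟨p, hp⟩) ⟨n, rfl⟩
    refine ⟨u, hu, ?_⟩
    rw [← hf (hj.trans (map_smul f u n).symm)]
    exact j.2

end LocalizedInduction

section Devissage

variable {R : Type u} [CommRing R] [IsNoetherianRing R] {a : Ideal R} {N : Type u} [AddCommGroup N]
  [Module R N]

lemma extFinite_ker {n : ℕ} (hn : n ≤ 1) (hN : ∀ i ≤ n, ExtFinite a N i) (f : N →ₗ[R] N) :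
    ∀ i ≤ n, ExtFinite a f.ker i := by
  intro i hi
  have hN0 : ExtFinite a N 0 := hN 0 (Nat.zero_le n)
  match i, hi.trans hn with
  | 0, _ =>
    have : Mono (ModuleCat.ofHom f.ker.subtype) :=
      (ModuleCat.mono_iff_injective _).2 f.ker.subtype_injective
    exact finite_ext_zero_of_mono (ModuleCat.ofHom f.ker.subtype)
  | 1, _ =>
    have : Mono (ModuleCat.ofHom f.range.subtype) :=
      (ModuleCat.mono_iff_injective _).2 f.range.subtype_injective
    have : ExtFinite a f.range 0 := finite_ext_zero_of_mono (ModuleCat.ofHom f.range.subtype)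
    have : ExtFinite a N (0 + 1) := hN 1 hi
    exact finite_ext_left (i := 0) (shortExact_subtype_ker_rangeRestrict f)

lemma extFinite_quotient {n : ℕ} {J : Submodule R N} (hN : ∀ i < n, ExtFinite a N i)
    (hJ : ∀ i < n, ExtFinite a J (i + 1)) : ∀ i < n, ExtFinite a (N ⧸ J) i := by
  intro i hi
  have := hN i hi
  have := hJ i hi
  exact finite_ext_right (shortExact_subtype_mkQ J)

variable {W : Set (PrimeSpectrum R)} {n : ℕ}

lemma extFinite_of_smul (hn : n ≤ 1) (hN : ∀ i ≤ n, ExtFinite a N i) {x : R} (hx : x ∈ a)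
    (hxW : ¬ Disjoint W (Module.support R (N ⧸ (LinearMap.lsmul R N x).ker)))
    (hsub : ∀ J : Submodule R N, ¬ Disjoint W (Module.support R (N ⧸ J)) →
      (∀ i ≤ n, ExtFinite a J i) → ∀ i, ExtFinite a J i)
    (hquot : ∀ J : Submodule R N, Disjoint W (Module.support R (N ⧸ J)) →
      (∀ i < n, ExtFinite a (N ⧸ J) i) → ∀ i, ExtFinite a (N ⧸ J) i) (i : ℕ) :
    ExtFinite a N i := by
  let f := LinearMap.lsmul R N x
  have hker : ∀ i, ExtFinite a f.ker i := hsub f.ker hxW (extFinite_ker hn hN f)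
  have hrange : ∀ i ≤ n, ExtFinite a f.range i := by
    intro i hi
    have := hN i hi
    have := hker (i + 1)
    exact finite_ext_right (shortExact_subtype_ker_rangeRestrict f)
  by_cases hW : Disjoint W (Module.support R (N ⧸ f.range))
  · exact extFinite_of_ker_of_quotient_range hx hker
      (hquot f.range hW <| extFinite_quotient (fun i hi ↦ hN i hi.le) fun i ↦ hrange (i + 1)) i
  · have := hker i
    have := hsub f.range hW hrange i
    exact finite_ext_middle (shortExact_subtype_ker_rangeRestrict f)

/-- If some `x ∈ a` acts nontrivially at a prime of `W`, split `N` along multiplication by `x`;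
otherwise `N` agrees with its `a`-torsion on `W`. -/
lemma extFinite_of_devissage (hn : n ≤ 1) (hN : ∀ i ≤ n, ExtFinite a N i)
    (hsub : ∀ J : Submodule R N, ¬ Disjoint W (Module.support R (N ⧸ J)) →
      (∀ i ≤ n, ExtFinite a J i) → ∀ i, ExtFinite a J i)
    (hquot : ∀ J : Submodule R N, Disjoint W (Module.support R (N ⧸ J)) →
      (∀ i < n, ExtFinite a (N ⧸ J) i) → ∀ i, ExtFinite a (N ⧸ J) i) (i : ℕ) :
    ExtFinite a N i := by
  by_cases hW : ∃ x ∈ a, ¬ Disjoint W (Module.support R (N ⧸ (LinearMap.lsmul R N x).ker))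
  · obtain ⟨x, hx, hxW⟩ := hW
    exact extFinite_of_smul hn hN hx hxW hsub hquot i
  · push Not at hW
    let T := Submodule.torsionBySet R N (a : Set R)
    have : Module.Finite R T := extFinite_zero_iff.1 (hN 0 (Nat.zero_le n))
    have hT : ∀ i, ExtFinite a T i := ModuleCat.finite_ext R _ _
    have hTW : Disjoint W (Module.support R (N ⧸ T)) := Set.disjoint_left.2 fun p hp ↦
      notMem_support_quotient_torsionBySet (IsNoetherian.noetherian a) fun x hx ↦
        Set.disjoint_left.1 (hW x hx) hp
    have := hquot T hTW (extFinite_quotient (fun i hi ↦ hN i hi.le) fun i _ ↦ hT (i + 1)) i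
    exact finite_ext_middle (shortExact_subtype_mkQ T)

end Devissage

section Dimension

variable {R : Type u} [CommRing R] [IsNoetherianRing R] {a : Ideal R}

lemma krullDim_lt_of_disjoint_minimal {α : Type*} [PartialOrder α] {s t : Set α} (hts : t ⊆ s)
    (h : Disjoint {x | Minimal (· ∈ s) x} t) {n : ℕ} (hs : Order.krullDim s < (n + 1 : ℕ)) :
    Order.krullDim t < n := by
  rw [Order.krullDim_lt_coe_iff] at hs ⊢
  intro l
  obtain ⟨y, hy, hyl⟩ : ∃ y ∈ s, y < (l.head : α) := by
    by_contra! hc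
    exact Set.disjoint_left.1 h ⟨hts l.head.2, fun y hy hyl ↦
      (hyl.lt_or_eq.resolve_left (hc y hy)).ge⟩ l.head.2
  let l' : LTSeries s := l.map (Set.inclusion hts) fun _ _ h ↦ h
  exact Nat.succ_lt_succ_iff.1
    ((RelSeries.cons_length l' ⟨y, hy⟩ hyl).symm.trans_lt (hs (l'.cons ⟨y, hy⟩ hyl)))

theorem extFinite_of_supportDim_lt {n : ℕ} (hn : n ≤ 2) (M : Type u) [AddCommGroup M] [Module R M]
    (hM : Module.support R M ⊆ PrimeSpectrum.zeroLocus (a : Set R))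
    (hdim : Module.supportDim R M < n) (hExt : ∀ i < n, ExtFinite a M i) (i : ℕ) :
    ExtFinite a M i := by
  induction n generalizing M i with
  | zero =>
    have : Subsingleton M := by
      by_contra! h
      have := (Module.nonempty_support_iff (R := R)).2 h
      have := this.to_subtype
      exact hdim.not_ge Order.krullDim_nonneg
    exact ModuleCat.finite_ext R _ _ i
  | succ n ih =>
    let W := {p | Minimal (· ∈ Module.support R M) p}
    have : Module.Finite R (Submodule.torsionBySet R M (a : Set R)) :=
      extFinite_zero_iff.1 (hExt 0 n.succ_pos)
    suffices (∀ i < n + 1, ExtFinite a M i) → ∀ i, ExtFinite a M i from this hExt i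
    refine induction_localizedModule_artinian (M := M) (W := W)
      (P := fun N _ _ ↦ (∀ i < n + 1, ExtFinite a N i) → ∀ i, ExtFinite a N i)
      (finite_setOf_minimal_support hM) (fun p hp ↦ isArtinian_localizedModule hM hp) ?_
    intro N _ _ f hf hsub hN
    refine extFinite_of_devissage (n := n) (W := W) (by lia) (fun i hi ↦ hN i (by lia))
      (fun J hJ hJn ↦ hsub J hJ fun i hi ↦ hJn i (by lia)) fun J hJ hJn i ↦ ?_
    have hJM : Module.support R (N ⧸ J) ⊆ Module.support R M :=
      (Module.support_subset_of_surjective J.mkQ J.mkQ_surjective).trans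
        (Module.support_subset_of_injective f hf)
    exact ih (by lia) (N ⧸ J) (hJM.trans hM) (krullDim_lt_of_disjoint_minimal hJM hJ hdim) hJn i

end Dimension

section AssociatedPrimes

variable {R M : Type*} [CommRing R] [AddCommGroup M] [Module R M]

lemma colon_singleton_sup_smul_span {L : Submodule R M} {p : Ideal R} {z : M}
    (h : L.colon {z} ≤ p) : (L ⊔ p • (R ∙ z)).colon {z} = p := by
  ext r
  rw [Submodule.mem_colon_singleton]
  refine ⟨fun hr ↦ ?_, fun hr ↦ Submodule.mem_sup_right <|
    Submodule.smul_mem_smul hr (Submodule.mem_span_singleton_self z)⟩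
  obtain ⟨l, hl, v, hv, hlv⟩ := Submodule.mem_sup.1 hr
  obtain ⟨c, hc, rfl⟩ := Submodule.mem_smul_span_singleton.1 hv
  have hrc : r - c ∈ L.colon {z} := by
    rwa [Submodule.mem_colon_singleton, sub_smul, ← hlv, add_sub_cancel_right]
  exact (sub_add_cancel r c) ▸ add_mem (h hrc) hc

variable [IsNoetherianRing R]

/-- Take `z = s • y` with `s ∈ I ^ k`, `s ∉ p`, where `k` comes from the Artin-Rees lemma for
`N ≤ N + R y`. -/
lemma exists_colon_singleton_le_and_span_inf_le {N L : Submodule R M} (hN : N.FG) {I : Ideal R}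
    (hI : I • N ≤ L) {p : Ideal R} [hp : p.IsPrime] (hIp : ¬ I ≤ p) {y : M}
    (hy : N.colon {y} ≤ p) : ∃ z : M, N.colon {z} ≤ p ∧ (R ∙ z) ⊓ N ≤ L := by
  let P := N ⊔ R ∙ y
  have : Module.Finite R P :=
    Module.Finite.iff_fg.2 (hN.sup (Submodule.fg_span_singleton y))
  have hyP : y ∈ P := Submodule.mem_sup_right (Submodule.mem_span_singleton_self y)
  let N' : Submodule R P := N.comap P.subtype
  obtain ⟨k, hk⟩ := I.exists_pow_inf_eq_pow_smul N'
  have hAR : I ^ (k + 1) • ⊤ ⊓ N' ≤ L.comap P.subtype := by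
    rw [hk (k + 1) k.le_succ, Nat.add_sub_cancel_left, pow_one, Submodule.smul_le]
    exact fun c hc n hn ↦ hI (Submodule.smul_mem_smul hc hn.2)
  obtain ⟨s, hs, hsp⟩ := SetLike.not_le_iff_exists.1 (mt (hp.le_of_pow_le (n := k + 1)) hIp)
  refine ⟨s • y, fun r hr ↦ ?_, ?_⟩
  · rw [Submodule.mem_colon_singleton, smul_smul] at hr
    exact (hp.mem_or_mem (hy (Submodule.mem_colon_singleton.2 hr))).resolve_right hsp
  · rintro w ⟨hw, hwN⟩
    obtain ⟨r, rfl⟩ := Submodule.mem_span_singleton.1 hw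
    have hpow : r • s • (⟨y, hyP⟩ : P) ∈ I ^ (k + 1) • (⊤ : Submodule R P) :=
      Submodule.smul_mem _ r (Submodule.smul_mem_smul hs Submodule.mem_top)
    exact hAR ⟨hpow, hwN⟩

variable (M) in
/-- A finite approximation to a quotient of `M` with many associated primes: `N ⧸ L` is finitely
generated, its associated primes include `primes`, and its support lies above them. -/
structure AssApprox (T : Set (PrimeSpectrum R)) where
  N : Submodule R M
  L : Submodule R M
  primes : Finset (PrimeSpectrum R)
  fg : N.FG
  le : L ≤ N
  subset : ↑primes ⊆ T
  prod_smul_le : (∏ p ∈ primes, p.asIdeal) • N ≤ L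
  exists_colon_eq : ∀ p ∈ primes, ∃ z ∈ N, L.colon {z} = p.asIdeal

namespace AssApprox

variable {T : Set (PrimeSpectrum R)}

/-- The condition on `L` makes `σ.N ⧸ σ.L` a submodule of `τ.N ⧸ τ.L`. -/
instance : Preorder (AssApprox M T) where
  le σ τ := (σ.N ≤ τ.N ∧ σ.primes ⊆ τ.primes) ∧ σ.L ≤ τ.L ∧ τ.L ⊓ σ.N ≤ σ.L
  le_refl σ := ⟨⟨le_rfl, subset_rfl⟩, le_rfl, inf_le_left⟩
  le_trans ρ σ τ h h' := ⟨⟨h.1.1.trans h'.1.1, h.1.2.trans h'.1.2⟩, h.2.1.trans h'.2.1,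
    fun _ hw ↦ h.2.2 ⟨h'.2.2 ⟨hw.1, h.1.1 hw.2⟩, hw.2⟩⟩

/-- The zero submodule, with no primes. -/
instance : Inhabited (AssApprox M T) where
  default :=
    { N := ⊥, L := ⊥, primes := ∅, fg := Submodule.fg_bot, le := le_rfl, subset := by simp
      prod_smul_le := by simp, exists_colon_eq := by simp }

lemma exists_le_mem_primes (hT : IsAntichain (· ≤ ·) T) (σ : AssApprox M T) {p : PrimeSpectrum R}
    (hpT : p ∈ T) (hp : p ∈ Module.support R (M ⧸ σ.N)) (hpσ : p ∉ σ.primes) :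
    ∃ τ, σ ≤ τ ∧ p ∈ τ.primes := by
  classical
  obtain ⟨y, hy⟩ : ∃ y : M, σ.N.colon {y} ≤ p.asIdeal := by
    by_contra! hc
    refine notMem_support_quotient_iff.2 (fun m ↦ ?_) hp
    obtain ⟨u, hu, hup⟩ := SetLike.not_le_iff_exists.1 (hc m)
    exact ⟨u, hup, Submodule.mem_colon_singleton.1 hu⟩
  have hprod : ¬ ∏ q ∈ σ.primes, q.asIdeal ≤ p.asIdeal := fun h ↦ by
    obtain ⟨q, hq, hqp⟩ := p.2.prod_le.1 h
    exact hpσ (hT.eq (σ.subset hq) hpT hqp ▸ hq)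
  obtain ⟨z, hz, hzL⟩ := exists_colon_singleton_le_and_span_inf_le σ.fg σ.prod_smul_le hprod hy
  have hzp := colon_singleton_sup_smul_span ((Submodule.colon_mono σ.le subset_rfl).trans hz)
  have hinf : (σ.L ⊔ p.asIdeal • (R ∙ z)) ⊓ σ.N ≤ σ.L := by
    rw [sup_inf_assoc_of_le _ σ.le]
    exact sup_le le_rfl ((inf_le_inf_right _ Submodule.smul_le_right).trans hzL)
  refine ⟨⟨σ.N ⊔ R ∙ z, σ.L ⊔ p.asIdeal • (R ∙ z), insert p σ.primes,
    σ.fg.sup (Submodule.fg_span_singleton z), sup_le_sup σ.le Submodule.smul_le_right, ?_, ?_, ?_⟩,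
    ⟨⟨le_sup_left, Finset.subset_insert _ _⟩, le_sup_left, hinf⟩, Finset.mem_insert_self _ _⟩
  · rw [Finset.coe_insert]
    exact Set.insert_subset hpT σ.subset
  · rw [Finset.prod_insert hpσ, Submodule.smul_sup]
    exact sup_le_sup ((Submodule.smul_mono_left Ideal.mul_le_right).trans σ.prod_smul_le)
      (Submodule.smul_mono_left Ideal.mul_le_left)
  · refine Finset.forall_mem_insert .. |>.2 ⟨⟨z, Submodule.mem_sup_right
      (Submodule.mem_span_singleton_self z), hzp⟩, fun q hq ↦ ?_⟩
    obtain ⟨w, hw, hwq⟩ := σ.exists_colon_eq q hq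
    refine ⟨w, Submodule.mem_sup_left hw, ?_⟩
    rw [← hwq]
    refine le_antisymm (fun r hr ↦ ?_) (Submodule.colon_mono le_sup_left subset_rfl)
    exact Submodule.mem_colon_singleton.2
      (hinf ⟨Submodule.mem_colon_singleton.1 hr, σ.N.smul_mem r hw⟩)

lemma asIdeal_mem_associatedPrimes {σ : ℕ → AssApprox M T} (hσ : Monotone σ) {n : ℕ}
    {p : PrimeSpectrum R} (hp : p ∈ (σ n).primes) :
    p.asIdeal ∈ associatedPrimes R (M ⧸ ⨆ k, (σ k).L) := by
  have hL : Monotone fun k ↦ (σ k).L := fun i j h ↦ (hσ h).2.1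
  obtain ⟨z, hz, hzp⟩ := (σ n).exists_colon_eq p hp
  refine isAssociatedPrime_iff.2 ⟨p.2, Submodule.Quotient.mk z, ?_⟩
  ext r
  rw [← hzp, Submodule.mem_colon_singleton, Submodule.mem_colon_singleton, Submodule.mem_bot,
    ← Submodule.Quotient.mk_smul, Submodule.Quotient.mk_eq_zero,
    Submodule.mem_iSup_of_directed _ hL.directed_le]
  refine ⟨fun h ↦ ⟨n, h⟩, fun ⟨k, hk⟩ ↦ ?_⟩
  exact (hσ (le_max_right k n)).2.2 ⟨hL (le_max_left k n) hk, Submodule.smul_mem _ r hz⟩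

end AssApprox

theorem exists_fg_finite_inter_support {T : Set (PrimeSpectrum R)} (hT : IsAntichain (· ≤ ·) T)
    (hwl : ∀ N : Submodule R M, (associatedPrimes R (M ⧸ N)).Finite) :
    ∃ N : Submodule R M, N.FG ∧ (T ∩ Module.support R (M ⧸ N)).Finite := by
  by_contra! hc
  have hext (σ : AssApprox M T) : ∃ τ, σ ≤ τ ∧ σ.primes ⊂ τ.primes := by
    obtain ⟨p, ⟨hpT, hp⟩, hpσ⟩ := (hc σ.N σ.fg).exists_notMem_finset σ.primes
    obtain ⟨τ, hστ, hpτ⟩ := σ.exists_le_mem_primes hT hpT hp hpσ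
    exact ⟨τ, hστ, hστ.1.2, fun h ↦ hpσ (h hpτ)⟩
  choose next hle hlt using hext
  let σ (n : ℕ) : AssApprox M T := next^[n] default
  have hσ (n : ℕ) : σ (n + 1) = next (σ n) := Function.iterate_succ_apply' ..
  have hmono : Monotone σ := monotone_nat_of_le_succ fun n ↦ (hσ n).symm ▸ hle (σ n)
  have hcard : StrictMono fun n ↦ (σ n).primes.card :=
    strictMono_nat_of_lt_succ fun n ↦ (hσ n).symm ▸ Finset.card_lt_card (hlt (σ n))
  have hfin : (PrimeSpectrum.asIdeal ⁻¹' associatedPrimes R (M ⧸ ⨆ k, (σ k).L)).Finite :=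
    (hwl _).preimage fun p _ q _ h ↦ PrimeSpectrum.ext h
  have hsub (n : ℕ) : (σ n).primes ⊆ hfin.toFinset := fun p hp ↦
    hfin.mem_toFinset.2 (AssApprox.asIdeal_mem_associatedPrimes hmono hp)
  exact (hcard.le_apply (x := hfin.toFinset.card + 1)).not_gt
    (Nat.lt_succ_of_le (Finset.card_le_card (hsub _)))

end AssociatedPrimes

section SupportDimension

variable {R : Type*} [CommRing R] [IsNoetherianRing R]

lemma infinite_Ioo_of_lt_of_lt {r q m : PrimeSpectrum R} (hrq : r < q) (hqm : q < m) :
    (Set.Ioo r m).Infinite := by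
  intro hfin
  have hcover : (m.asIdeal : Set R) ⊆
      ⋃ p ∈ (hfin.toFinset : Set (PrimeSpectrum R)), (p.asIdeal : Set R) := by
    intro x hx
    obtain ⟨p, hxp, hrp, hpm⟩ := PrimeSpectrum.exist_mem_one_of_mem_two hrq hqm hx
    exact Set.mem_biUnion (hfin.mem_toFinset.2 ⟨hrp, hpm⟩) hxp
  obtain ⟨p, hp, hmp⟩ :=
    (Ideal.subset_union_prime (f := PrimeSpectrum.asIdeal) q q fun p _ _ _ ↦ p.2).1 hcover
  exact (hfin.mem_toFinset.1 hp).2.not_ge hmp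

lemma exists_fg_supportDim_quotient_le_one {M : Type*} [AddCommGroup M] [Module R M]
    (hwl : ∀ N : Submodule R M, (associatedPrimes R (M ⧸ N)).Finite) :
    ∃ N : Submodule R M, N.FG ∧ Module.supportDim R (M ⧸ N) ≤ 1 := by
  let T : Set (PrimeSpectrum R) := {p | Maximal (fun q ↦ ¬ IsMax q) p}
  obtain ⟨N, hN, hfin⟩ := exists_fg_finite_inter_support (setOfPred_maximal_antichain _) hwl
    (T := T)
  refine ⟨N, hN, ?_⟩
  let B := {r | r ∈ Module.support R (M ⧸ N) ∧ ∃ q m, r < q ∧ q < m}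
  rw [Module.supportDim, Order.krullDim_le_one_iff]
  by_contra! hc
  obtain ⟨q, hqmin, hqmax⟩ := hc
  obtain ⟨r₀, hr₀⟩ := not_isMin_iff.1 hqmin
  obtain ⟨m₀, hm₀⟩ := not_isMax_iff.1 hqmax
  have hB : B.Nonempty := ⟨r₀, r₀.2, q, m₀, hr₀, hm₀⟩
  have : WellFoundedGT (PrimeSpectrum R) :=
    StrictMono.wellFoundedGT (f := PrimeSpectrum.asIdeal) fun _ _ h ↦ h
  obtain ⟨r, ⟨hr, q', m, hrq, hqm⟩, hmax⟩ := exists_maximal_of_wellFoundedGT (· ∈ B) hB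
  refine infinite_Ioo_of_lt_of_lt hrq hqm (hfin.subset fun p hp ↦ ?_)
  have hps : p ∈ Module.support R (M ⧸ N) := Module.mem_support_mono hp.1.le hr
  refine ⟨⟨not_isMax_iff.2 ⟨m, hp.2⟩, fun p' hp' hpp' ↦ ?_⟩, hps⟩
  by_contra hlt
  obtain ⟨m', hm'⟩ := not_isMax_iff.1 hp'
  exact hp.1.not_ge (hmax ⟨hps, p', m', lt_of_le_not_ge hpp' hlt, hm'⟩ hp.1.le)

end SupportDimension

end Cofiniteness

open Cofiniteness

theorem stmt10 {R : Type u} [CommRing R] [IsNoetherianRing R] (a : Ideal R)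
    (M : ModuleCat.{u} R)
    (hwl : ∀ N : Submodule R M, (associatedPrimes R (M ⧸ N)).Finite)
    (hsupp : Module.support R M ⊆ PrimeSpectrum.zeroLocus (a : Set R)) :
    IsCofinite a M ↔
      (Module.Finite R (extQuot a 0 M) ∧ Module.Finite R (extQuot a 1 M)) := by
  refine ⟨fun h ↦ ⟨h.2 0, h.2 1⟩, fun ⟨h0, h1⟩ ↦ ⟨hsupp, fun i ↦ ?_⟩⟩
  rw [finite_extQuot_iff] at h0 h1 ⊢
  have hExt : ∀ i < 2, ExtFinite a M i := fun i hi ↦ by interval_cases i <;> assumption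
  obtain ⟨N, hN, hdim⟩ := exists_fg_supportDim_quotient_le_one hwl
  have : Module.Finite R N := Module.Finite.iff_fg.2 hN
  have hNExt : ∀ i, ExtFinite a N i := ModuleCat.finite_ext R _ _
  have hquot : ∀ i, ExtFinite a (M ⧸ N) i :=
    extFinite_of_supportDim_lt le_rfl (M ⧸ N)
      ((Module.support_subset_of_surjective N.mkQ N.mkQ_surjective).trans hsupp)
      (hdim.trans_lt (by norm_num)) (extFinite_quotient hExt fun i _ ↦ hNExt (i + 1))
  have := hquot i
  exact finite_ext_middle (shortExact_subtype_mkQ N)
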